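/- Suppose ẑ ∈ ℂ_1^n satisfies ẑ = F_1(ẑ), and set ŝ = (z*)ᴴ ẑ. For any real δ > 0 with δ ≥ 2σ‖W‖/n, let z ∈ ℂ_{≤1}^n be the fixed point of G(·, ŝ, 2δn). Then (1/n)·Σ_{j=1}^n 1{|[Yẑ]_j| < δn} ≤ (9/n)·Σ_{j=1}^n 1{|z*_j ŝ + σ[Wz]_j| < 2δn}. -/

import Mathlib

open scoped Classical
open Matrix

noncomputable section

namespace PhaseSync

/-- Euclidean norm of a complex vector. -/
def enorm {k : ℕ} (v : Fin k → ℂ) : ℝ := Real.sqrt (∑ i, ‖v i‖ ^ 2)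

/-- Frobenius norm of a complex matrix. -/
def fnorm {k l : ℕ} (A : Matrix (Fin k) (Fin l) ℂ) : ℝ :=
  Real.sqrt (∑ i, ∑ j, ‖A i j‖ ^ 2)

/-- L2 operator norm of a square complex matrix. -/
def opNorm {k : ℕ} (A : Matrix (Fin k) (Fin k) ℂ) : ℝ :=
  ‖Matrix.toEuclideanCLM (𝕜 := ℂ) (n := Fin k) A‖

/-- Indicator function of a proposition. -/
def ind (P : Prop) : ℝ := if P then 1 else 0

/-- The loss ℓ_m(V, z) = min_{a : ‖a‖=1} ‖V - a zᴴ‖_F² / n. -/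
def lossM {k l : ℕ} (V : Matrix (Fin k) (Fin l) ℂ) (z : Fin l → ℂ) : ℝ :=
  sInf { r : ℝ | ∃ a : Fin k → ℂ, enorm a = 1 ∧
    r = fnorm (V - Matrix.vecMulVec a (star z)) ^ 2 / l }

/-- The loss ℓ_1(z', z) = min_{|a|=1} ‖z' - a z‖² / n. -/
def loss1 {l : ℕ} (z' z : Fin l → ℂ) : ℝ :=
  sInf { r : ℝ | ∃ a : ℂ, ‖a‖ = 1 ∧ r = enorm (z' - a • z) ^ 2 / l }

/-- The mapping F₁: entrywise normalization of Y z. -/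
def F1 {l : ℕ} (Y : Matrix (Fin l) (Fin l) ℂ) (z : Fin l → ℂ) : Fin l → ℂ :=
  fun j => if Y.mulVec z j ≠ 0 then Y.mulVec z j / (‖Y.mulVec z j‖ : ℂ) else z j

/-- jth column of a matrix. -/
def col {k l : ℕ} (A : Matrix (Fin k) (Fin l) ℂ) (j : Fin l) : Fin k → ℂ := fun i => A i j

/-- The mapping F_m: columnwise normalization of V Yᴴ. -/
def Fm {k l : ℕ} (Y : Matrix (Fin l) (Fin l) ℂ) (V : Matrix (Fin k) (Fin l) ℂ) :
    Matrix (Fin k) (Fin l) ℂ :=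
  Matrix.of fun i j =>
    if col (V * Yᴴ) j ≠ 0 then (V * Yᴴ) i j / ((enorm (col (V * Yᴴ) j) : ℝ) : ℂ) else V i j

/-- g_t(x) = x / max(|x|, t). -/
def gfun (t : ℝ) (x : ℂ) : ℂ := x / ((max (‖x‖) t : ℝ) : ℂ)

/-- The mapping G(z, s, t), coordinatewise g_t(z*_j s + σ [W z]_j). -/
def G {l : ℕ} (zstar : Fin l → ℂ) (σ : ℝ) (W : Matrix (Fin l) (Fin l) ℂ)
    (z : Fin l → ℂ) (s : ℂ) (t : ℝ) : Fin l → ℂ :=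
  fun j => gfun t (zstar j * s + (σ : ℂ) * W.mulVec z j)

/-- The mapping F₁'(z, s), entrywise normalization of z* s + σ W z. -/
def F1' {l : ℕ} (zstar : Fin l → ℂ) (σ : ℝ) (W : Matrix (Fin l) (Fin l) ℂ)
    (z : Fin l → ℂ) (s : ℂ) : Fin l → ℂ :=
  fun j =>
    if zstar j * s + (σ : ℂ) * W.mulVec z j ≠ 0 then
      (zstar j * s + (σ : ℂ) * W.mulVec z j) /
        ((‖zstar j * s + (σ : ℂ) * W.mulVec z j‖ : ℝ) : ℂ)
    else z j

/-- W with jth row and column zeroed out. -/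
def Wminus {l : ℕ} (W : Matrix (Fin l) (Fin l) ℂ) (j : Fin l) : Matrix (Fin l) (Fin l) ℂ :=
  Matrix.of fun k i => if k = j ∨ i = j then 0 else W k i

/-!
Write `x = z* ŝ + σWz` and `y = Yẑ = z* ŝ + σWẑ`, so that `y - x = σW(ẑ - z)`, and let `τ = δn`.
If `2τ ≤ |x_j|`, then `z_j` is the phase of `x_j` while `ẑ_j` is the phase of `y_j`, so
`|ẑ_j - z_j| ≤ |y_j - x_j| / τ`; otherwise `|ẑ_j - z_j| ≤ 2`. With `B = #{j : |x_j| < 2τ}` and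
`S = ‖ẑ - z‖²` this gives `S ≤ ‖y - x‖² / τ² + 4B ≤ S / 4 + 4B`, as `σ‖W‖ ≤ τ / 2`; hence
`S ≤ 16B / 3`. A coordinate with `|y_j| < τ` has `|x_j| < 2τ` or `|y_j - x_j| ≥ τ`, so there are at
most `B + S / 4 ≤ 7B / 3` of them.
-/

lemma ind_nonneg (P : Prop) : 0 ≤ ind P := by
  unfold ind
  split_ifs <;> norm_num

lemma ind_norm_lt_le {E : Type*} [SeminormedAddCommGroup E] {τ : ℝ} (hτ : 0 < τ) (x y : E) :
    ind (‖y‖ < τ) ≤ ind (‖x‖ < 2 * τ) + (‖y - x‖ / τ) ^ 2 := by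
  by_cases hy : ‖y‖ < τ
  · by_cases hx : ‖x‖ < 2 * τ
    · simp only [ind, if_pos hy, if_pos hx]
      linarith [sq_nonneg (‖y - x‖ / τ)]
    · have hyx : 1 ≤ ‖y - x‖ / τ := by
        rw [one_le_div hτ]
        linarith [norm_sub_norm_le x y, norm_sub_rev x y]
      simp only [ind, if_pos hy, if_neg hx, zero_add]
      exact one_le_pow₀ hyx
  · simp only [ind, if_neg hy]
    exact add_nonneg (ind_nonneg _) (sq_nonneg _)

lemma norm_mul_norm_sub_normalize_le {E : Type*} [NormedAddCommGroup E] [NormedSpace ℝ E]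
    {u : E} (hu : ‖u‖ = 1) {r : ℝ} (hr : 0 ≤ r) (x : E) :
    ‖x‖ * ‖u - NormedSpace.normalize x‖ ≤ 2 * ‖r • u - x‖ := by
  have hru : ‖r • u‖ = r := by rw [norm_smul, hu, mul_one, Real.norm_of_nonneg hr]
  have hradial : |‖x‖ - r| ≤ ‖r • u - x‖ := by
    simpa only [hru, norm_sub_rev x] using abs_norm_sub_norm_le x (r • u)
  calc ‖x‖ * ‖u - NormedSpace.normalize x‖
      = ‖‖x‖ • (u - NormedSpace.normalize x)‖ := by rw [norm_smul, norm_norm]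
    _ = ‖(‖x‖ - r) • u + (r • u - x)‖ := by
        rw [smul_sub, NormedSpace.norm_smul_normalize, sub_smul, sub_add_sub_cancel]
    _ ≤ ‖(‖x‖ - r) • u‖ + ‖r • u - x‖ := norm_add_le _ _
    _ = |‖x‖ - r| + ‖r • u - x‖ := by rw [norm_smul, hu, mul_one, Real.norm_eq_abs]
    _ ≤ 2 * ‖r • u - x‖ := by linarith

lemma norm_gfun_le_one (t : ℝ) (x : ℂ) : ‖gfun t x‖ ≤ 1 := by
  have hmax : ‖x‖ ≤ max ‖x‖ t := le_max_left _ _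
  have hmax_nonneg : 0 ≤ max ‖x‖ t := (norm_nonneg x).trans hmax
  rw [gfun, norm_div, Complex.norm_of_nonneg hmax_nonneg]
  exact div_le_one_of_le₀ hmax hmax_nonneg

lemma gfun_eq_normalize {t : ℝ} {x : ℂ} (hx : t ≤ ‖x‖) : gfun t x = NormedSpace.normalize x := by
  rw [gfun, max_eq_left hx, NormedSpace.normalize, Complex.real_smul, Complex.ofReal_inv,
    div_eq_inv_mul]

lemma norm_sub_gfun_le {τ : ℝ} (hτ : 0 < τ) {u : ℂ} (hu : ‖u‖ = 1) {r : ℝ} (hr : 0 ≤ r) {x : ℂ}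
    (hx : 2 * τ ≤ ‖x‖) : ‖u - gfun (2 * τ) x‖ ≤ ‖r • u - x‖ / τ := by
  rw [gfun_eq_normalize hx, le_div_iff₀ hτ]
  have hscale := mul_le_mul_of_nonneg_right hx (norm_nonneg (u - NormedSpace.normalize x))
  linarith [norm_mul_norm_sub_normalize_le hu hr x]

lemma norm_sub_gfun_sq_le {τ : ℝ} (hτ : 0 < τ) {u : ℂ} (hu : ‖u‖ = 1) {r : ℝ} (hr : 0 ≤ r)
    (x : ℂ) :
    ‖u - gfun (2 * τ) x‖ ^ 2 ≤ (‖r • u - x‖ / τ) ^ 2 + 4 * ind (‖x‖ < 2 * τ) := by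
  by_cases hx : ‖x‖ < 2 * τ
  · have htwo : ‖u - gfun (2 * τ) x‖ ≤ 2 := by
      linarith [norm_sub_le u (gfun (2 * τ) x), norm_gfun_le_one (2 * τ) x]
    simp only [ind, if_pos hx]
    nlinarith [norm_nonneg (u - gfun (2 * τ) x), sq_nonneg (‖r • u - x‖ / τ)]
  · simp only [ind, if_neg hx, mul_zero, add_zero]
    exact pow_le_pow_left₀ (norm_nonneg _) (norm_sub_gfun_le hτ hu hr (not_lt.mp hx)) 2

theorem sum_ind_norm_lt_le {ι : Type*} [Fintype ι] {τ : ℝ} (hτ : 0 < τ) {u x y : ι → ℂ}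
    (hu : ∀ j, ‖u j‖ = 1) (hy : ∀ j, y j = ‖y j‖ • u j)
    (hyx : ∑ j, ‖y j - x j‖ ^ 2 ≤ (τ / 2) ^ 2 * ∑ j, ‖u j - gfun (2 * τ) (x j)‖ ^ 2) :
    ∑ j, ind (‖y j‖ < τ) ≤ 7 / 3 * ∑ j, ind (‖x j‖ < 2 * τ) := by
  have hsmall : ∑ j, ind (‖y j‖ < τ) ≤
      ∑ j, ind (‖x j‖ < 2 * τ) + ∑ j, (‖y j - x j‖ / τ) ^ 2 := by
    rw [← Finset.sum_add_distrib]
    exact Finset.sum_le_sum fun j _ => ind_norm_lt_le hτ (x j) (y j)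
  have hphase : ∑ j, ‖u j - gfun (2 * τ) (x j)‖ ^ 2 ≤
      ∑ j, (‖y j - x j‖ / τ) ^ 2 + 4 * ∑ j, ind (‖x j‖ < 2 * τ) := by
    rw [Finset.mul_sum, ← Finset.sum_add_distrib]
    refine Finset.sum_le_sum fun j _ => ?_
    simpa only [← hy j] using norm_sub_gfun_sq_le hτ (hu j) (norm_nonneg (y j)) (x j)
  have hcontract : ∑ j, (‖y j - x j‖ / τ) ^ 2 ≤
      1 / 4 * ∑ j, ‖u j - gfun (2 * τ) (x j)‖ ^ 2 := by
    simp only [div_pow, ← Finset.sum_div]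
    rw [div_le_iff₀ (by positivity)]
    linarith
  linarith

lemma opNorm_smul {k : ℕ} (c : ℂ) (A : Matrix (Fin k) (Fin k) ℂ) :
    opNorm (c • A) = ‖c‖ * opNorm A := by
  rw [opNorm, map_smul, norm_smul, opNorm]

lemma sum_norm_sq_mulVec_le {k : ℕ} (A : Matrix (Fin k) (Fin k) ℂ) (v : Fin k → ℂ) :
    ∑ i, ‖(A *ᵥ v) i‖ ^ 2 ≤ opNorm A ^ 2 * ∑ i, ‖v i‖ ^ 2 := by
  have hle := pow_le_pow_left₀ (norm_nonneg _)
    ((toEuclideanCLM (𝕜 := ℂ) A).le_opNorm (WithLp.toLp 2 v)) 2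
  rwa [mul_pow, EuclideanSpace.norm_sq_eq, EuclideanSpace.norm_sq_eq] at hle

lemma mulVec_eq_norm_smul_of_eq_F1 {l : ℕ} {Y : Matrix (Fin l) (Fin l) ℂ} {z : Fin l → ℂ}
    (hz : z = F1 Y z) (j : Fin l) : (Y *ᵥ z) j = ‖(Y *ᵥ z) j‖ • z j := by
  by_cases hYz : (Y *ᵥ z) j = 0
  · simp [hYz]
  · have hzj : z j = (Y *ᵥ z) j / ‖(Y *ᵥ z) j‖ := (congrFun hz j).trans (if_pos hYz)
    have hnorm : (‖(Y *ᵥ z) j‖ : ℂ) ≠ 0 := by simpa using hYz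
    rw [Complex.real_smul]
    exact ((eq_div_iff hnorm).mp hzj).symm.trans (mul_comm _ _)

lemma vecMulVec_add_smul_mulVec_apply {m k R : Type*} [Fintype k] [CommSemiring R] (a : m → R)
    (b : k → R) (c : R) (A : Matrix m k R) (v : k → R) (j : m) :
    ((vecMulVec a b + c • A) *ᵥ v) j = a j * (b ⬝ᵥ v) + c * (A *ᵥ v) j := by
  simp [add_mulVec, smul_mulVec, vecMulVec_mulVec, mul_comm (a j)]

theorem stmt18_general {n : ℕ} (hn : 1 ≤ n) (zstar : Fin n → ℂ) (σ : ℝ)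
    (W : Matrix (Fin n) (Fin n) ℂ) (Y : Matrix (Fin n) (Fin n) ℂ)
    (hY : Y = Matrix.vecMulVec zstar (star zstar) + (σ : ℂ) • W)
    (zhat : Fin n → ℂ) (hzhat1 : ∀ j, ‖zhat j‖ = 1) (hzhat2 : zhat = F1 Y zhat)
    (δ : ℝ) (hδ0 : 0 < δ) (hδ : 2 * |σ| * opNorm W / n ≤ δ) (z : Fin n → ℂ)
    (hz : z = G zstar σ W z (dotProduct (star zstar) zhat) (2 * δ * n)) :
    (1 / (n : ℝ)) * ∑ j : Fin n, ind (‖Y.mulVec zhat j‖ < δ * n) ≤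
      (7 / 3 / (n : ℝ)) * ∑ j : Fin n,
        ind (‖zstar j * dotProduct (star zstar) zhat +
          (σ : ℂ) * W.mulVec z j‖ < 2 * δ * n) := by
  have hn0 : (0 : ℝ) < n := by exact_mod_cast hn
  rw [mul_assoc 2 δ] at hz ⊢
  set x : Fin n → ℂ := fun j => zstar j * (star zstar ⬝ᵥ zhat) + σ * (W *ᵥ z) j
  have hzx : ∀ j, z j = gfun (2 * (δ * n)) (x j) := congrFun hz
  have hsub : ∀ j, (Y *ᵥ zhat) j - x j = (((σ : ℂ) • W) *ᵥ (zhat - z)) j := fun j => by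
    rw [hY, vecMulVec_add_smul_mulVec_apply, add_sub_add_left_eq_sub, smul_mulVec, mulVec_sub,
      Pi.smul_apply, Pi.sub_apply, smul_eq_mul, mul_sub]
  have hop : opNorm ((σ : ℂ) • W) ≤ δ * n / 2 := by
    rw [div_le_iff₀ hn0] at hδ
    rw [opNorm_smul, Complex.norm_real, Real.norm_eq_abs]
    linarith
  have hcontract : ∑ j, ‖(Y *ᵥ zhat) j - x j‖ ^ 2 ≤
      (δ * n / 2) ^ 2 * ∑ j, ‖zhat j - gfun (2 * (δ * n)) (x j)‖ ^ 2 := by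
    simp only [hsub, ← hzx]
    exact (sum_norm_sq_mulVec_le _ _).trans
      (mul_le_mul_of_nonneg_right (pow_le_pow_left₀ (norm_nonneg _) hop 2) (by positivity))
  have hcount := sum_ind_norm_lt_le (mul_pos hδ0 hn0) hzhat1
    (mulVec_eq_norm_smul_of_eq_F1 hzhat2) hcontract
  rw [div_mul_eq_mul_div, div_mul_eq_mul_div, one_mul]
  gcongr

theorem stmt18 {n : ℕ} (hn : 1 ≤ n)
    (zstar : Fin n → ℂ) (hzstar : ∀ j, ‖zstar j‖ = 1)
    (σ : ℝ) (hσ : 0 < σ) (W : Matrix (Fin n) (Fin n) ℂ) (hW : W.IsHermitian)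
    (Y : Matrix (Fin n) (Fin n) ℂ)
    (hY : Y = Matrix.vecMulVec zstar (star zstar) + (σ : ℂ) • W)
    (zhat : Fin n → ℂ) (hzhat1 : ∀ j, ‖zhat j‖ = 1) (hzhat2 : zhat = F1 Y zhat)
    (δ : ℝ) (hδ0 : 0 < δ) (hδ : 2 * σ * opNorm W / n ≤ δ)
    (z : Fin n → ℂ) (hz1 : ∀ i, ‖z i‖ ≤ 1)
    (hz2 : z = G zstar σ W z (dotProduct (star zstar) zhat) (2 * δ * n)) :
    (1 / (n : ℝ)) * ∑ j : Fin n, ind (‖Y.mulVec zhat j‖ < δ * n) ≤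
      (9 / (n : ℝ)) * ∑ j : Fin n,
        ind (‖zstar j * dotProduct (star zstar) zhat +
          (σ : ℂ) * W.mulVec z j‖ < 2 * δ * n) :=
  (stmt18_general hn zstar σ W Y hY zhat hzhat1 hzhat2 δ hδ0 (by rwa [abs_of_pos hσ]) z hz2).trans
    (mul_le_mul_of_nonneg_right (by gcongr; norm_num) (Finset.sum_nonneg fun _ _ => ind_nonneg _))

end PhaseSync
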